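/- arXiv:2001.10016 — 3 statements merged into one kernel-verified Lean document; each statement's English description precedes it below -/
import Mathlib

section
/- Let θ_j ∈ (0,1/2) for j ≥ 0, let S be a set of nonnegative integers and let g^{(1)} be the associated oscillating function. Then: (a) for every k ≥ 0, the average (1/Θ_k) ∫_{W_σ} g^{(1)} dx is the same for all white intervals W_σ of generation k; and (b) if k ∈ S and k+1 ∈ S, then for every white interval W of generation k and every white interval W′ of generation k+1, | (1/Θ_k)∫_W g^{(1)} dx − (1/Θ_{k+1})∫_{W′} g^{(1)} dx | ≥ 2 (1−2θ_k)(1−2θ_{k+1}). -/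
open MeasureTheory

/-- `Θ_k = θ_0 θ_1 ⋯ θ_{k-1}`. -/
noncomputable def Theta (θ : ℕ → ℝ) (k : ℕ) : ℝ := ∏ j ∈ Finset.range k, θ j

/-- Signs `±1` indexed by booleans. -/
def sgn (b : Bool) : ℝ := if b then 1 else -1

/-- Midpoint `m_σ = ∑_{j<k} σ_j (1-θ_j) Θ_j / 2` associated to a sign pattern `σ ∈ {−1,1}^k`. -/
noncomputable def cmid (θ : ℕ → ℝ) {k : ℕ} (σ : Fin k → Bool) : ℝ :=
  ∑ j : Fin k, sgn (σ j) * (1 - θ (j : ℕ)) * Theta θ (j : ℕ) / 2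

/-- The white interval of generation `k`: closed interval of length `Θ_k` centered at `m_σ`. -/
noncomputable def whiteInterval (θ : ℕ → ℝ) {k : ℕ} (σ : Fin k → Bool) : Set ℝ :=
  Set.Icc (cmid θ σ - Theta θ k / 2) (cmid θ σ + Theta θ k / 2)

/-- The black interval of generation `k`: open interval of length `(1-2θ_k) Θ_k`
centered at `m_σ`. -/
noncomputable def blackInterval (θ : ℕ → ℝ) {k : ℕ} (σ : Fin k → Bool) : Set ℝ :=
  Set.Ioo (cmid θ σ - (1 - 2 * θ k) * Theta θ k / 2)
    (cmid θ σ + (1 - 2 * θ k) * Theta θ k / 2)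

/-- The oscillating function `g^{(1)} = ∑_{k∈S} (−1)^k ∑_σ 1_{B_σ}`. -/
noncomputable def oscFun (θ : ℕ → ℝ) (S : Set ℕ) (x : ℝ) : ℝ :=
  ∑' k : ℕ, S.indicator
    (fun k => (-1 : ℝ) ^ k *
      ∑ σ : Fin k → Bool, (blackInterval θ σ).indicator 1 x) k

/-!
Renormalization: the affine map taking the root white interval `[-1/2, 1/2]` onto a white interval
of generation `k` turns `g^{(1)}` for `(θ, S)` into `(-1)^k` times `g^{(1)}` for the sequence and
the set shifted by `k`. Hence every average over generation `k` equals `(-1)^k A_k`, where `A_k` is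
the mean over `[-1/2, 1/2]` of the shifted function. Splitting `[-1/2, 1/2]` into its black
interval and the two white intervals of generation one gives
`A_k = 1_S(k) (1 - 2 θ_k) - 2 θ_k A_{k+1}`. If `k, k + 1 ∈ S`, then
`A_k + A_{k+1} = (1 - 2 θ_k) (1 + A_{k+1})`, and `|A_{k+2}| ≤ 1` yields
`1 + A_{k+1} ≥ 2 (1 - 2 θ_{k+1})`.
-/

section Intervals

variable {θ : ℕ → ℝ} {k : ℕ}

lemma Theta_succ' (θ : ℕ → ℝ) (k : ℕ) :
    Theta θ (k + 1) = θ 0 * Theta (fun j => θ (j + 1)) k := by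
  rw [Theta, Finset.prod_range_succ', mul_comm, Theta]

lemma Theta_pos (hθ : ∀ j, 0 < θ j) (k : ℕ) : 0 < Theta θ k :=
  Finset.prod_pos fun j _ => hθ j

/-- The midpoint of the white interval of generation one with sign `b`; the affine map
`y ↦ childMid θ b + θ 0 * y` takes `[-1/2, 1/2]` onto that interval. -/
noncomputable def childMid (θ : ℕ → ℝ) (b : Bool) : ℝ := sgn b * (1 - θ 0) / 2

lemma childMid_false (θ : ℕ → ℝ) : childMid θ false = -((1 - θ 0) / 2) := by
  simp only [childMid, sgn, Bool.false_eq_true, if_false, neg_one_mul, neg_div]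

lemma childMid_true (θ : ℕ → ℝ) : childMid θ true = (1 - θ 0) / 2 := by
  simp only [childMid, sgn, if_true, one_mul]

lemma abs_childMid (h1 : θ 0 ≤ 1) (b : Bool) : |childMid θ b| = (1 - θ 0) / 2 := by
  have hnonneg : 0 ≤ (1 - θ 0) / 2 := by linarith
  cases b
  · rw [childMid_false, abs_neg, abs_of_nonneg hnonneg]
  · rw [childMid_true, abs_of_nonneg hnonneg]

lemma half_sub_le_abs_childMid_add (h0 : θ 0 ∈ Set.Icc 0 1) (b : Bool) {y : ℝ}
    (hy : |y| ≤ 1 / 2) : 1 / 2 - θ 0 ≤ |childMid θ b + θ 0 * y| := by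
  have hdist := abs_sub_abs_le_abs_add (childMid θ b) (θ 0 * y)
  rw [abs_childMid h0.2, abs_mul, abs_of_nonneg h0.1] at hdist
  linarith [mul_le_mul_of_nonneg_left hy h0.1]

lemma childMid_not (θ : ℕ → ℝ) (b : Bool) : childMid θ (!b) = -childMid θ b := by
  cases b <;> simp [childMid_false, childMid_true]

lemma cmid_zero (θ : ℕ → ℝ) (σ : Fin 0 → Bool) : cmid θ σ = 0 := Fin.sum_univ_zero _

lemma cmid_cons (θ : ℕ → ℝ) (b : Bool) (σ : Fin k → Bool) :
    cmid θ (Fin.cons b σ : Fin (k + 1) → Bool) =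
      childMid θ b + θ 0 * cmid (fun j => θ (j + 1)) σ := by
  rw [cmid, Fin.sum_univ_succ, cmid, Finset.mul_sum]
  congr 1
  · simp [childMid, Theta]
  · refine Finset.sum_congr rfl fun j _ => ?_
    rw [Fin.cons_succ, Fin.val_succ, Theta_succ']
    ring

lemma abs_cmid_le (hθ : ∀ j, θ j ∈ Set.Icc 0 1) (σ : Fin k → Bool) :
    |cmid θ σ| ≤ (1 - Theta θ k) / 2 := by
  induction k generalizing θ with
  | zero => simp [cmid_zero, Theta]
  | succ k ih =>
    cases σ using Fin.consCases with
    | cons b σ =>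
      have hchild := abs_childMid (hθ 0).2 b
      have hrest : |θ 0 * cmid (fun j => θ (j + 1)) σ| ≤
          θ 0 * ((1 - Theta (fun j => θ (j + 1)) k) / 2) := by
        rw [abs_mul, abs_of_nonneg (hθ 0).1]
        exact mul_le_mul_of_nonneg_left (ih (fun j => hθ (j + 1)) σ) (hθ 0).1
      rw [cmid_cons, Theta_succ']
      linarith [abs_add_le (childMid θ b) (θ 0 * cmid (fun j => θ (j + 1)) σ)]

lemma mem_blackInterval_iff {σ : Fin k → Bool} {x : ℝ} :
    x ∈ blackInterval θ σ ↔ |x - cmid θ σ| < (1 / 2 - θ k) * Theta θ k := by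
  rw [blackInterval, ← Real.ball_eq_Ioo, Metric.mem_ball, Real.dist_eq,
    show (1 - 2 * θ k) * Theta θ k / 2 = (1 / 2 - θ k) * Theta θ k by ring]

lemma mem_blackInterval_zero_iff {σ : Fin 0 → Bool} {x : ℝ} :
    x ∈ blackInterval θ σ ↔ |x| < 1 / 2 - θ 0 := by
  simp [mem_blackInterval_iff, cmid_zero, Theta]

lemma mem_blackInterval_cons_iff (h0 : 0 < θ 0) {b : Bool} {σ : Fin k → Bool} {x : ℝ} :
    x ∈ blackInterval θ (Fin.cons b σ : Fin (k + 1) → Bool) ↔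
      (x - childMid θ b) / θ 0 ∈ blackInterval (fun j => θ (j + 1)) σ := by
  have hscale : (x - childMid θ b) / θ 0 - cmid (fun j => θ (j + 1)) σ =
      (x - (childMid θ b + θ 0 * cmid (fun j => θ (j + 1)) σ)) / θ 0 := by
    field_simp
    ring
  rw [mem_blackInterval_iff, mem_blackInterval_iff, cmid_cons, Theta_succ', hscale, abs_div,
    abs_of_pos h0, div_lt_iff₀ h0]
  ring_nf

lemma abs_lt_half_of_mem_blackInterval (hθ : ∀ j, θ j ∈ Set.Icc 0 1) {σ : Fin k → Bool} {x : ℝ}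
    (hx : x ∈ blackInterval θ σ) : |x| < 1 / 2 := by
  have hΘ : 0 ≤ Theta θ k := Finset.prod_nonneg fun j _ => (hθ j).1
  have hx' := mem_blackInterval_iff.1 hx
  have hsub := abs_sub_abs_le_abs_sub x (cmid θ σ)
  linarith [abs_cmid_le hθ σ, mul_nonneg (hθ k).1 hΘ]

end Intervals

section BlackCount

/-- The number of black intervals of generation `k` containing `x`, real-valued because the
oscillating function is a signed sum of these counts over the generations in `S`. -/
noncomputable def blackCount (θ : ℕ → ℝ) (k : ℕ) (x : ℝ) : ℝ :=
  ∑ σ : Fin k → Bool, (blackInterval θ σ).indicator 1 x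

variable {θ : ℕ → ℝ}

lemma measurable_blackCount (θ : ℕ → ℝ) (k : ℕ) : Measurable (blackCount θ k) :=
  Finset.measurable_fun_sum _ fun _ _ => measurable_one.indicator measurableSet_Ioo

lemma blackCount_zero (θ : ℕ → ℝ) (x : ℝ) :
    blackCount θ 0 x = if |x| < 1 / 2 - θ 0 then 1 else 0 := by
  classical
  rw [blackCount, Fintype.sum_unique, Set.indicator_apply]
  simp only [mem_blackInterval_zero_iff, Pi.one_apply]

lemma blackCount_succ (h0 : 0 < θ 0) (k : ℕ) (x : ℝ) :
    blackCount θ (k + 1) x =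
      ∑ b, blackCount (fun j => θ (j + 1)) k ((x - childMid θ b) / θ 0) := by
  rw [blackCount, ← (Fin.consEquiv fun _ => Bool).sum_comp, Fintype.sum_prod_type]
  refine Finset.sum_congr rfl fun b _ => Finset.sum_congr rfl fun σ _ => ?_
  classical
  rw [Set.indicator_apply, Set.indicator_apply]
  exact if_congr (mem_blackInterval_cons_iff h0) rfl rfl

lemma blackCount_eq_zero_of_forall_notMem {k : ℕ} {x : ℝ}
    (hx : ∀ σ : Fin k → Bool, x ∉ blackInterval θ σ) : blackCount θ k x = 0 :=
  Finset.sum_eq_zero fun σ _ => Set.indicator_of_notMem (hx σ) _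

lemma blackCount_eq_zero_of_half_le_abs (hθ : ∀ j, θ j ∈ Set.Icc 0 1) (k : ℕ) {x : ℝ}
    (hx : 1 / 2 ≤ |x|) : blackCount θ k x = 0 :=
  blackCount_eq_zero_of_forall_notMem fun _ hmem =>
    hx.not_gt (abs_lt_half_of_mem_blackInterval hθ hmem)

lemma blackCount_succ_of_abs_lt (hθ : ∀ j, θ j ∈ Set.Icc 0 1) (h0 : 0 < θ 0) (k : ℕ) {x : ℝ}
    (hx : |x| < 1 / 2 - θ 0) : blackCount θ (k + 1) x = 0 := by
  rw [blackCount_succ h0]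
  refine Finset.sum_eq_zero fun b _ => ?_
  apply blackCount_eq_zero_of_half_le_abs fun j => hθ (j + 1)
  have hdist := abs_sub_abs_le_abs_sub (childMid θ b) x
  rw [abs_childMid (hθ 0).2, abs_sub_comm] at hdist
  rw [abs_div, abs_of_pos h0, le_div_iff₀ h0]
  linarith

lemma blackCount_succ_childMid_add (hθ : ∀ j, θ j ∈ Set.Icc 0 1) (h0 : θ 0 ∈ Set.Ioc 0 (1 / 2))
    (k : ℕ) (b : Bool) {y : ℝ} (hy : |y| ≤ 1 / 2) :
    blackCount θ (k + 1) (childMid θ b + θ 0 * y) = blackCount (fun j => θ (j + 1)) k y := by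
  obtain ⟨hpos, hle⟩ := h0
  have hother : 1 / 2 ≤ |(childMid θ b + θ 0 * y - childMid θ (!b)) / θ 0| := by
    have hdist := abs_sub_abs_le_abs_add (2 * childMid θ b) (θ 0 * y)
    rw [abs_mul 2, abs_childMid (hθ 0).2, abs_two, abs_mul, abs_of_pos hpos] at hdist
    rw [childMid_not, sub_neg_eq_add, abs_div, abs_of_pos hpos, le_div_iff₀ hpos,
      show childMid θ b + θ 0 * y + childMid θ b = 2 * childMid θ b + θ 0 * y by ring]
    linarith [mul_le_mul_of_nonneg_left hy hpos.le]
  rw [blackCount_succ hpos, Fintype.sum_eq_single b]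
  · rw [add_sub_cancel_left, mul_div_cancel_left₀ y hpos.ne']
  · intro b' hb'
    rw [Bool.eq_not.2 hb']
    exact blackCount_eq_zero_of_half_le_abs (fun j => hθ (j + 1)) k hother

end BlackCount

section OscFun

lemma Ioc_zero_half_subset_Icc : Set.Ioc (0 : ℝ) (1 / 2) ⊆ Set.Icc 0 1 :=
  Set.Ioc_subset_Icc_self.trans (Set.Icc_subset_Icc_right (by norm_num))

variable {θ : ℕ → ℝ}

lemma oscFun_eq_tsum_blackCount (θ : ℕ → ℝ) (S : Set ℕ) (x : ℝ) :
    oscFun θ S x = ∑' k, S.indicator (fun k => (-1 : ℝ) ^ k * blackCount θ k x) k := rfl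

lemma measurable_oscFun (θ : ℕ → ℝ) (S : Set ℕ) : Measurable (oscFun θ S) := by
  classical
  refine Measurable.tsum fun k => ?_
  simp only [Set.indicator_apply]
  exact Measurable.ite (.const _) ((measurable_blackCount θ k).const_mul _) measurable_const

lemma oscFun_eq_zero_of_forall_notMem (S : Set ℕ) {x : ℝ}
    (hx : ∀ (k : ℕ) (σ : Fin k → Bool), x ∉ blackInterval θ σ) : oscFun θ S x = 0 := by
  simp [oscFun_eq_tsum_blackCount, fun k => blackCount_eq_zero_of_forall_notMem (hx k)]

variable (hθ : ∀ j, θ j ∈ Set.Ioc 0 (1 / 2)) (S : Set ℕ)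
include hθ

lemma oscFun_of_abs_lt {x : ℝ} (hx : |x| < 1 / 2 - θ 0) :
    oscFun θ S x = S.indicator 1 0 := by
  classical
  rw [oscFun_eq_tsum_blackCount, tsum_eq_single 0]
  · simp only [Set.indicator_apply, blackCount_zero, if_pos hx, pow_zero, one_mul, Pi.one_apply]
  · intro k hk
    obtain ⟨k, rfl⟩ := Nat.exists_eq_succ_of_ne_zero hk
    have hzero := blackCount_succ_of_abs_lt (fun j => Ioc_zero_half_subset_Icc (hθ j)) (hθ 0).1 k hx
    simp [Set.indicator_apply, hzero]

lemma oscFun_childMid_add (b : Bool) {y : ℝ} (hy : |y| ≤ 1 / 2) :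
    oscFun θ S (childMid θ b + θ 0 * y) =
      -oscFun (fun j => θ (j + 1)) {j | j + 1 ∈ S} y := by
  classical
  have hIcc : ∀ j, θ j ∈ Set.Icc 0 1 := fun j => Ioc_zero_half_subset_Icc (hθ j)
  have hzero : blackCount θ 0 (childMid θ b + θ 0 * y) = 0 := by
    have houter := half_sub_le_abs_childMid_add (hIcc 0) b hy
    rw [blackCount_zero, if_neg houter.not_gt]
  rw [oscFun_eq_tsum_blackCount, oscFun_eq_tsum_blackCount, ← tsum_neg,
    ← Nat.succ_injective.tsum_eq]
  · refine tsum_congr fun k => ?_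
    simp only [Nat.succ_eq_add_one, Set.indicator_apply, Set.mem_ofPred_eq,
      blackCount_succ_childMid_add hIcc (hθ 0) k b hy]
    split_ifs <;> ring
  · intro k hk
    refine ⟨k.pred, Nat.succ_pred fun hk0 => hk ?_⟩
    simp [hk0, Set.indicator_apply, hzero]

lemma oscFun_cmid_add {k : ℕ} (σ : Fin k → Bool) {y : ℝ} (hy : |y| ≤ 1 / 2) :
    oscFun θ S (cmid θ σ + Theta θ k * y) =
      (-1) ^ k * oscFun (fun j => θ (j + k)) {j | j + k ∈ S} y := by
  induction k generalizing θ S with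
  | zero => simp [cmid_zero, Theta]
  | succ k ih =>
    cases σ using Fin.consCases with
    | cons b σ =>
      have hy' : |cmid (fun j => θ (j + 1)) σ + Theta (fun j => θ (j + 1)) k * y| ≤ 1 / 2 := by
        have hΘ := Theta_pos (fun j => (hθ (j + 1)).1) k
        have hmid := abs_cmid_le (fun j => Ioc_zero_half_subset_Icc (hθ (j + 1))) σ
        refine (abs_add_le _ _).trans ?_
        rw [abs_mul, abs_of_pos hΘ]
        linarith [mul_le_mul_of_nonneg_left hy hΘ.le]
      rw [cmid_cons, Theta_succ', mul_assoc, add_assoc, ← mul_add, oscFun_childMid_add hθ S b hy',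
        ih (fun j => hθ (j + 1)), pow_succ, mul_neg_one, neg_mul]
      rfl

lemma oscFun_of_mem_blackInterval {k : ℕ} {σ : Fin k → Bool} {x : ℝ}
    (hx : x ∈ blackInterval θ σ) :
    oscFun θ S x = S.indicator (fun k => (-1) ^ k) k := by
  classical
  have hΘ := Theta_pos (fun j => (hθ j).1) k
  have hy : |(x - cmid θ σ) / Theta θ k| < 1 / 2 - θ k := by
    rw [abs_div, abs_of_pos hΘ, div_lt_iff₀ hΘ]
    exact mem_blackInterval_iff.1 hx
  have hx_eq : x = cmid θ σ + Theta θ k * ((x - cmid θ σ) / Theta θ k) := by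
    field_simp
    ring
  rw [hx_eq, oscFun_cmid_add hθ S σ (by linarith [(hθ k).1]),
    oscFun_of_abs_lt (fun j => hθ (j + k)) _ (by rwa [zero_add])]
  simp [Set.indicator_apply]

lemma abs_oscFun_le_one (x : ℝ) : |oscFun θ S x| ≤ 1 := by
  classical
  by_cases hx : ∃ (k : ℕ) (σ : Fin k → Bool), x ∈ blackInterval θ σ
  · obtain ⟨k, σ, hσ⟩ := hx
    rw [oscFun_of_mem_blackInterval hθ S hσ, Set.indicator_apply]
    split_ifs <;> simp
  · push Not at hx
    simp [oscFun_eq_zero_of_forall_notMem S hx]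

lemma intervalIntegrable_oscFun (a b : ℝ) : IntervalIntegrable (oscFun θ S) volume a b :=
  (intervalIntegrable_const (c := (1 : ℝ))).mono_fun
    (measurable_oscFun θ S).aestronglyMeasurable
    (.of_forall fun x => by
      simpa only [norm_one, Real.norm_eq_abs] using abs_oscFun_le_one hθ S x)

end OscFun

section Averages

variable {θ : ℕ → ℝ}

lemma one_div_Theta_mul_setIntegral_whiteInterval {k : ℕ} (hΘ : 0 < Theta θ k)
    (σ : Fin k → Bool) (f : ℝ → ℝ) :
    1 / Theta θ k * ∫ x in whiteInterval θ σ, f x =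
      ∫ y in (-1 / 2)..(1 / 2), f (cmid θ σ + Theta θ k * y) := by
  rw [intervalIntegral.integral_comp_add_mul f hΘ.ne', whiteInterval, integral_Icc_eq_integral_Ioc,
    ← intervalIntegral.integral_of_le (by linarith), one_div, smul_eq_mul]
  ring_nf

/-- The average of the oscillating function over the white interval `[-1/2, 1/2]` of generation
zero. -/
noncomputable def oscMean (θ : ℕ → ℝ) (S : Set ℕ) : ℝ :=
  ∫ x in (-1 / 2)..(1 / 2), oscFun θ S x

variable (hθ : ∀ j, θ j ∈ Set.Ioc 0 (1 / 2)) (S : Set ℕ)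
include hθ

lemma average_oscFun_sub_const {k : ℕ} (σ : Fin k → Bool) (c : ℝ) :
    (1 / Theta θ k * ∫ x in whiteInterval θ σ, (oscFun θ S x - c)) =
      (-1) ^ k * oscMean (fun j => θ (j + k)) {j | j + k ∈ S} - c := by
  have hrescale : Set.EqOn (fun y => oscFun θ S (cmid θ σ + Theta θ k * y) - c)
      (fun y => (-1) ^ k * oscFun (fun j => θ (j + k)) {j | j + k ∈ S} y - c)
      (Set.uIcc (-1 / 2) (1 / 2)) := by
    intro y hy
    rw [Set.uIcc_of_le (by norm_num), Set.mem_Icc, neg_div, ← abs_le] at hy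
    simp only [oscFun_cmid_add hθ S σ hy]
  rw [one_div_Theta_mul_setIntegral_whiteInterval (Theta_pos (fun j => (hθ j).1) k) σ
      fun x => oscFun θ S x - c,
    intervalIntegral.integral_congr hrescale, intervalIntegral.integral_sub
      ((intervalIntegrable_oscFun (fun j => hθ (j + k)) _ _ _).const_mul _)
      intervalIntegrable_const, intervalIntegral.integral_const_mul,
    intervalIntegral.integral_const, oscMean]
  norm_num

lemma average_oscFun {k : ℕ} (σ : Fin k → Bool) :
    (1 / Theta θ k * ∫ x in whiteInterval θ σ, oscFun θ S x) =
      (-1) ^ k * oscMean (fun j => θ (j + k)) {j | j + k ∈ S} := by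
  simpa only [sub_zero] using average_oscFun_sub_const hθ S σ 0

lemma abs_oscMean_le_one : |oscMean θ S| ≤ 1 := by
  rw [oscMean, ← Real.norm_eq_abs]
  calc ‖∫ x in (-1 / 2)..(1 / 2), oscFun θ S x‖
      ≤ 1 * |(1 / 2 : ℝ) - -1 / 2| :=
        intervalIntegral.norm_integral_le_of_norm_le_const fun x _ => abs_oscFun_le_one hθ S x
    _ = 1 := by norm_num

lemma integral_oscFun_child (b : Bool) :
    ∫ x in (childMid θ b + θ 0 * (-1 / 2))..(childMid θ b + θ 0 * (1 / 2)), oscFun θ S x =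
      -(θ 0 * oscMean (fun j => θ (j + 1)) {j | j + 1 ∈ S}) := by
  have hrescale : Set.EqOn (fun y => oscFun θ S (childMid θ b + θ 0 * y))
      (fun y => -oscFun (fun j => θ (j + 1)) {j | j + 1 ∈ S} y)
      (Set.uIcc (-1 / 2) (1 / 2)) := by
    intro y hy
    rw [Set.uIcc_of_le (by norm_num), Set.mem_Icc, neg_div, ← abs_le] at hy
    exact oscFun_childMid_add hθ S b hy
  rw [← intervalIntegral.smul_integral_comp_add_mul, intervalIntegral.integral_congr hrescale,
    intervalIntegral.integral_neg, smul_eq_mul, mul_neg, oscMean]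

lemma integral_oscFun_center :
    ∫ x in (-(1 / 2 - θ 0))..(1 / 2 - θ 0), oscFun θ S x =
      (1 - 2 * θ 0) * S.indicator 1 0 := by
  have hle : -(1 / 2 - θ 0) ≤ 1 / 2 - θ 0 := by linarith [(hθ 0).2]
  have hconst : Set.EqOn (oscFun θ S) (fun _ => S.indicator 1 0)
      (Set.uIoo (-(1 / 2 - θ 0)) (1 / 2 - θ 0)) := by
    intro x hx
    rw [Set.uIoo_of_le hle, Set.mem_Ioo, ← abs_lt] at hx
    exact oscFun_of_abs_lt hθ S hx
  rw [intervalIntegral.integral_congr_uIoo hconst, intervalIntegral.integral_const, smul_eq_mul]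
  ring

lemma oscMean_eq : oscMean θ S = (1 - 2 * θ 0) * S.indicator 1 0 -
    2 * θ 0 * oscMean (fun j => θ (j + 1)) {j | j + 1 ∈ S} := by
  have hleft := integral_oscFun_child hθ S false
  have hright := integral_oscFun_child hθ S true
  rw [show childMid θ false + θ 0 * (-1 / 2) = -1 / 2 by rw [childMid_false]; ring,
    show childMid θ false + θ 0 * (1 / 2) = -(1 / 2 - θ 0) by rw [childMid_false]; ring] at hleft
  rw [show childMid θ true + θ 0 * (-1 / 2) = 1 / 2 - θ 0 by rw [childMid_true]; ring,
    show childMid θ true + θ 0 * (1 / 2) = 1 / 2 by rw [childMid_true]; ring] at hright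
  have hint := intervalIntegrable_oscFun hθ S
  rw [oscMean, ← intervalIntegral.integral_add_adjacent_intervals (hint _ (1 / 2 - θ 0)) (hint _ _),
    ← intervalIntegral.integral_add_adjacent_intervals (hint _ (-(1 / 2 - θ 0))) (hint _ _),
    hleft, integral_oscFun_center hθ S, hright]
  ring

lemma le_oscMean_add_oscMean_shift (h0 : 0 ∈ S) (h1 : 1 ∈ S) :
    2 * (1 - 2 * θ 0) * (1 - 2 * θ 1) ≤
      oscMean θ S + oscMean (fun j => θ (j + 1)) {j | j + 1 ∈ S} := by
  have hrec := oscMean_eq hθ S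
  have hrec' := oscMean_eq (fun j => hθ (j + 1)) {j | j + 1 ∈ S}
  have hbound := (abs_le.1 (abs_oscMean_le_one (fun j => hθ (j + 1 + 1)) {j | j + 1 + 1 ∈ S})).2
  simp only [Set.indicator_of_mem h0, Pi.one_apply, mul_one] at hrec
  simp only [Set.indicator_of_mem (show 0 ∈ {j | j + 1 ∈ S} from h1), Pi.one_apply, mul_one,
    zero_add, Set.mem_ofPred_eq] at hrec'
  have hshift : 2 * (1 - 2 * θ 1) ≤ 1 + oscMean (fun j => θ (j + 1)) {j | j + 1 ∈ S} := by
    linarith [mul_le_mul_of_nonneg_left hbound (hθ 1).1.le]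
  calc 2 * (1 - 2 * θ 0) * (1 - 2 * θ 1)
      = (1 - 2 * θ 0) * (2 * (1 - 2 * θ 1)) := by ring
    _ ≤ (1 - 2 * θ 0) * (1 + oscMean (fun j => θ (j + 1)) {j | j + 1 ∈ S}) :=
      mul_le_mul_of_nonneg_left hshift (by linarith [(hθ 0).2])
    _ = oscMean θ S + oscMean (fun j => θ (j + 1)) {j | j + 1 ∈ S} := by rw [hrec]; ring

end Averages

/-- (a) The average of `g^{(1)}` over a white interval of generation `k` does not depend on the
choice of white interval; (b) if `k ∈ S` and `k+1 ∈ S`, then the averages of `g^{(1)}` over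
white intervals of consecutive generations `k` and `k+1` differ by at least
`2 (1-2θ_k)(1-2θ_{k+1})`. -/
theorem oscFun_average_eq_and_average_gap
    (θ : ℕ → ℝ) (hθ : ∀ j, θ j ∈ Set.Ioo (0 : ℝ) (1 / 2)) (S : Set ℕ) :
    (∀ (k : ℕ) (σ σ' : Fin k → Bool),
      (1 / Theta θ k) * ∫ x in whiteInterval θ σ, oscFun θ S x =
        (1 / Theta θ k) * ∫ x in whiteInterval θ σ', oscFun θ S x) ∧
    (∀ k : ℕ, k ∈ S → k + 1 ∈ S →
      ∀ (σ : Fin k → Bool) (σ' : Fin (k + 1) → Bool),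
        2 * (1 - 2 * θ k) * (1 - 2 * θ (k + 1)) ≤
          |(1 / Theta θ k) * ∫ x in whiteInterval θ σ, oscFun θ S x -
            (1 / Theta θ (k + 1)) * ∫ x in whiteInterval θ σ', oscFun θ S x|) := by
  have hθ' : ∀ j, θ j ∈ Set.Ioc 0 (1 / 2) := fun j => Set.Ioo_subset_Ioc_self (hθ j)
  refine ⟨fun k σ σ' => by rw [average_oscFun hθ', average_oscFun hθ'], fun k hk hk1 σ σ' => ?_⟩
  have hgap := le_oscMean_add_oscMean_shift (fun j => hθ' (j + k)) {j | j + k ∈ S}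
    (by simpa using hk) (by simpa [add_comm] using hk1)
  -- The integral sign extends over the difference, so the second average is a constant under it.
  rw [average_oscFun_sub_const hθ', average_oscFun hθ', pow_succ, mul_neg_one, neg_mul,
    sub_neg_eq_add, ← mul_add, abs_mul, abs_neg_one_pow, one_mul]
  simp only [Set.mem_ofPred_eq, zero_add, add_comm 1 k, add_right_comm _ 1 k] at hgap
  exact hgap.trans (le_abs_self _)
end

section
/- Let θ_j ∈ (0,1/2) for j ≥ 0, let S be a set of nonnegative integers and let g^{(1)} ∈ L^1(ℝ) be the associated oscillating function. Then for every ξ ∈ ℝ with ξ ≠ 0, the inverse Fourier transform satisfies ǧ^{(1)}(ξ) = ∑_{k∈S} (−1)^k · (sin((1−2θ_k) Θ_k π ξ) / (π ξ)) · 2^k ∏_{j=0}^{k−1} cos((1−θ_j) Θ_j π ξ), and this series converges uniformly on {ξ : |ξ| ≥ δ} for every δ > 0. -/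
open MeasureTheory Filter
open scoped FourierTransform Real

/-- The oscillating function `g^{(1)} = ∑_{k∈S} (−1)^k ∑_σ 1_{B_σ}`, viewed as a
complex-valued function. -/
noncomputable def oscFunC (θ : ℕ → ℝ) (S : Set ℕ) (x : ℝ) : ℂ :=
  ((∑' k : ℕ, S.indicator
    (fun k => (-1 : ℝ) ^ k *
      ∑ σ : Fin k → Bool, (blackInterval θ σ).indicator 1 x) k : ℝ) : ℂ)

/-- The `k`-th term of the cosine-product expansion of `ǧ^{(1)}(ξ)`:
`(−1)^k (sin((1−2θ_k) Θ_k π ξ)/(π ξ)) 2^k ∏_{j<k} cos((1−θ_j) Θ_j π ξ)` for `k ∈ S`,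
and `0` for `k ∉ S`. -/
noncomputable def oscFourierTerm (θ : ℕ → ℝ) (S : Set ℕ) (k : ℕ) (ξ : ℝ) : ℂ :=
  ((S.indicator
    (fun k => (-1 : ℝ) ^ k * (Real.sin ((1 - 2 * θ k) * Theta θ k * π * ξ) / (π * ξ)) *
      2 ^ k * ∏ j ∈ Finset.range k, Real.cos ((1 - θ j) * Theta θ j * π * ξ)) k : ℝ) : ℂ)

/-!
The function `g^{(1)}` is an `L¹`-convergent series of finite combinations of indicators of
intervals: generation `k` has total length
`2 ^ k (1 - 2 θ_k) Θ_k = 2 ^ k Θ_k - 2 ^ (k + 1) Θ_{k+1}`, which telescopes. Since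
`‖f̌‖_∞ ≤ ‖f‖₁`, the inverse Fourier transforms of the generations form a series converging
uniformly to `ǧ^{(1)}`. An interval contributes a multiple of `sin (· ξ) / (π ξ)` times the
character at its midpoint, and the sum over signs of these characters factors into a product of
cosines because the midpoints are signed sums.
-/

section FourierInv

variable {ι V E : Type*} [NormedAddCommGroup V] [InnerProductSpace ℝ V] [MeasurableSpace V]
  [BorelSpace V] [FiniteDimensional ℝ V] [NormedAddCommGroup E] [NormedSpace ℂ E]

theorem integrable_fourierInv_integrand {f : V → E} (hf : Integrable f) (ξ : V) :
    Integrable fun v => Real.fourierChar (inner ℝ v ξ) • f v := by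
  simpa using (Real.fourierIntegral_convergent_iff (-ξ)).2 hf

theorem norm_fourierInv_le_integral_norm (f : V → E) (ξ : V) :
    ‖𝓕⁻ f ξ‖ ≤ ∫ v, ‖f v‖ :=
  VectorFourier.norm_fourierIntegral_le_integral_norm _ _ _ _ _

theorem fourierInv_const_smul (c : ℂ) (f : V → E) : 𝓕⁻ (c • f) = c • 𝓕⁻ f :=
  VectorFourier.fourierIntegral_const_smul _ _ _ f c

theorem fourierInv_finset_sum (s : Finset ι) {f : ι → V → E} (hf : ∀ i ∈ s, Integrable (f i))
    (ξ : V) : 𝓕⁻ (fun v => ∑ i ∈ s, f i v) ξ = ∑ i ∈ s, 𝓕⁻ (f i) ξ := by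
  simp only [Real.fourierInv_eq, Finset.smul_sum]
  exact integral_finsetSum s fun i hi => integrable_fourierInv_integrand (hf i hi) ξ

theorem hasSumUniformly_fourierInv [Countable ι] [CompleteSpace E] {f : ι → V → E}
    (hf : ∀ i, Integrable (f i)) (hsum : Summable fun i => ∫ v, ‖f i v‖) :
    HasSumUniformly (fun i => 𝓕⁻ (f i)) (𝓕⁻ fun v => ∑' i, f i v) := by
  have hasSum_apply (ξ : V) : HasSum (fun i => 𝓕⁻ (f i) ξ) (𝓕⁻ (fun v => ∑' i, f i v) ξ) := by
    simp only [Real.fourierInv_eq, ← tsum_const_smul']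
    exact hasSum_integral_of_summable_integral_norm
      (fun i => integrable_fourierInv_integrand (hf i) ξ) (by simpa only [Circle.norm_smul])
  rw [hasSumUniformly_iff_tendstoUniformly, ← funext fun ξ => (hasSum_apply ξ).tsum_eq]
  exact tendstoUniformly_tsum hsum fun i => norm_fourierInv_le_integral_norm (f i)

end FourierInv

theorem exp_mul_I_sub_exp_neg_mul_I (z : ℂ) :
    Complex.exp (z * Complex.I) - Complex.exp (-z * Complex.I) =
      2 * Complex.I * Complex.sin z := by
  linear_combination -Complex.I * Complex.two_sin z -
    (Complex.exp (-z * Complex.I) - Complex.exp (z * Complex.I)) * Complex.I_sq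

theorem fourierInv_indicator_Ioo {a b : ℝ} (hab : a ≤ b) {ξ : ℝ} (hξ : ξ ≠ 0) :
    𝓕⁻ ((Set.Ioo a b).indicator (1 : ℝ → ℂ)) ξ =
      Complex.exp (π * (a + b) * ξ * Complex.I) * (Real.sin ((b - a) * π * ξ) / (π * ξ) : ℝ) := by
  have hπ : (π : ℂ) ≠ 0 := Complex.ofReal_ne_zero.2 Real.pi_ne_zero
  have hξ' : (ξ : ℂ) ≠ 0 := Complex.ofReal_ne_zero.2 hξ
  have hc : 2 * π * ξ * Complex.I ≠ 0 := by simp [hπ, hξ']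
  have integrand_eq (x : ℝ) :
      Complex.exp (↑(2 * π * inner ℝ x ξ) * Complex.I) • (Set.Ioo a b).indicator (1 : ℝ → ℂ) x =
        (Set.Ioo a b).indicator (fun x : ℝ => Complex.exp (2 * π * ξ * Complex.I * x)) x := by
    by_cases hx : x ∈ Set.Ioo a b
    · simp only [Set.indicator_of_mem hx, Pi.one_apply, smul_eq_mul, mul_one,
        RCLike.inner_apply, conj_trivial]
      push_cast
      ring_nf
    · simp [hx]
  have exp_right : Complex.exp (2 * π * ξ * Complex.I * b) =
      Complex.exp (π * (a + b) * ξ * Complex.I) * Complex.exp ((b - a) * π * ξ * Complex.I) := by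
    rw [← Complex.exp_add]; ring_nf
  have exp_left : Complex.exp (2 * π * ξ * Complex.I * a) =
      Complex.exp (π * (a + b) * ξ * Complex.I) * Complex.exp (-((b - a) * π * ξ) * Complex.I) := by
    rw [← Complex.exp_add]; ring_nf
  rw [Real.fourierInv_eq', integral_congr_ae (.of_forall integrand_eq),
    integral_indicator measurableSet_Ioo, ← integral_Ioc_eq_integral_Ioo,
    ← intervalIntegral.integral_of_le hab, integral_exp_mul_complex hc, exp_right, exp_left,
    ← mul_sub, exp_mul_I_sub_exp_neg_mul_I]
  push_cast
  field_simp

theorem sum_exp_sum_sgn_mul_I {ι : Type*} [Fintype ι] [DecidableEq ι] (a : ι → ℂ) :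
    ∑ σ : ι → Bool, Complex.exp ((∑ j, sgn (σ j) * a j) * Complex.I) =
      2 ^ Fintype.card ι * ∏ j, Complex.cos (a j) :=
  calc
    _ = ∑ σ : ι → Bool, ∏ j, Complex.exp (sgn (σ j) * a j * Complex.I) := by
      simp only [Finset.sum_mul, Complex.exp_sum]
    _ = ∏ j, ∑ b : Bool, Complex.exp (sgn b * a j * Complex.I) :=
      (Fintype.prod_sum fun j b => Complex.exp (sgn b * a j * Complex.I)).symm
    _ = ∏ j, 2 * Complex.cos (a j) := by simp [sgn, Complex.two_cos]
    _ = _ := by rw [Finset.prod_mul_distrib, Finset.prod_const, Finset.card_univ]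

/-- The common length `(1 - 2 θ_k) Θ_k` of the black intervals of generation `k`. -/
noncomputable def blackLength (θ : ℕ → ℝ) (k : ℕ) : ℝ := (1 - 2 * θ k) * Theta θ k

/-- The sum `∑_σ 1_{B_σ}` over the black intervals of generation `k`, complex-valued so that its
Fourier transform can be taken. -/
noncomputable def blackGeneration (θ : ℕ → ℝ) (k : ℕ) (x : ℝ) : ℂ :=
  ∑ σ : Fin k → Bool, (blackInterval θ σ).indicator 1 x

section Generations

variable (θ : ℕ → ℝ)

theorem sum_exp_cmid (k : ℕ) (ξ : ℝ) :
    ∑ σ : Fin k → Bool, Complex.exp (2 * π * cmid θ σ * ξ * Complex.I) =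
      2 ^ k * ∏ j ∈ Finset.range k, (Real.cos ((1 - θ j) * Theta θ j * π * ξ) : ℂ) := by
  have phase_eq (σ : Fin k → Bool) : 2 * π * (cmid θ σ : ℂ) * ξ =
      ∑ j : Fin k, sgn (σ j) * ((1 - θ j) * Theta θ j * π * ξ : ℂ) := by
    push_cast [cmid]
    rw [Finset.mul_sum, Finset.sum_mul]
    exact Finset.sum_congr rfl fun j _ => by ring
  simp only [phase_eq, sum_exp_sum_sgn_mul_I, Fintype.card_fin, Finset.prod_range]
  push_cast
  rfl

theorem blackInterval_eq_Ioo {k : ℕ} (σ : Fin k → Bool) :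
    blackInterval θ σ =
      Set.Ioo (cmid θ σ - blackLength θ k / 2) (cmid θ σ + blackLength θ k / 2) :=
  rfl

theorem sum_two_pow_mul_blackLength (n : ℕ) :
    ∑ k ∈ Finset.range n, 2 ^ k * blackLength θ k = 1 - 2 ^ n * Theta θ n := by
  induction n with
  | zero => simp [Theta]
  | succ n ih =>
    rw [Finset.sum_range_succ, ih, blackLength, Theta, Theta, Finset.prod_range_succ]
    ring

theorem integrable_indicator_blackInterval {k : ℕ} (σ : Fin k → Bool) :
    Integrable ((blackInterval θ σ).indicator (1 : ℝ → ℂ)) :=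
  (integrable_indicator_iff measurableSet_Ioo).2 (integrableOn_const (by simp))

theorem integrable_blackGeneration (k : ℕ) : Integrable (blackGeneration θ k) :=
  integrable_finsetSum _ fun σ _ => integrable_indicator_blackInterval θ σ

variable {θ}

theorem Theta_nonneg (hθ : ∀ j, 0 ≤ θ j) (k : ℕ) : 0 ≤ Theta θ k :=
  Finset.prod_nonneg fun j _ => hθ j

theorem blackLength_nonneg (hθ : ∀ j, θ j ∈ Set.Icc (0 : ℝ) (1 / 2)) (k : ℕ) :
    0 ≤ blackLength θ k :=
  mul_nonneg (by linarith [(hθ k).2]) (Theta_nonneg (fun j => (hθ j).1) k)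

theorem summable_two_pow_mul_blackLength (hθ : ∀ j, θ j ∈ Set.Icc (0 : ℝ) (1 / 2)) :
    Summable fun k => 2 ^ k * blackLength θ k := by
  refine summable_of_sum_range_le (c := 1)
    (fun k => mul_nonneg (by positivity) (blackLength_nonneg hθ k)) fun n => ?_
  rw [sum_two_pow_mul_blackLength]
  exact sub_le_self _ (mul_nonneg (by positivity) (Theta_nonneg (fun j => (hθ j).1) n))

theorem integral_norm_indicator_blackInterval {k : ℕ} (hk : 0 ≤ blackLength θ k)
    (σ : Fin k → Bool) :
    ∫ x, ‖(blackInterval θ σ).indicator (1 : ℝ → ℂ) x‖ = blackLength θ k := by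
  simp only [norm_indicator_eq_indicator_norm, Pi.one_apply, norm_one, blackInterval_eq_Ioo]
  rw [integral_indicator_const _ measurableSet_Ioo, Real.volume_real_Ioo_of_le (by linarith),
    smul_eq_mul]
  ring

theorem integral_norm_blackGeneration_le {k : ℕ} (hk : 0 ≤ blackLength θ k) :
    ∫ x, ‖blackGeneration θ k x‖ ≤ 2 ^ k * blackLength θ k := by
  have hint (σ : Fin k → Bool) := (integrable_indicator_blackInterval θ σ).norm
  calc
    _ ≤ ∫ x, ∑ σ : Fin k → Bool, ‖(blackInterval θ σ).indicator (1 : ℝ → ℂ) x‖ :=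
      integral_mono (integrable_blackGeneration θ k).norm
        (integrable_finsetSum _ fun σ _ => hint σ) fun x => norm_sum_le _ _
    _ = ∑ _σ : Fin k → Bool, blackLength θ k := by
      rw [integral_finsetSum _ fun σ _ => hint σ]
      simp only [integral_norm_indicator_blackInterval hk]
    _ = 2 ^ k * blackLength θ k := by simp

theorem fourierInv_indicator_blackInterval {k : ℕ} (hk : 0 ≤ blackLength θ k)
    (σ : Fin k → Bool) {ξ : ℝ} (hξ : ξ ≠ 0) :
    𝓕⁻ ((blackInterval θ σ).indicator (1 : ℝ → ℂ)) ξ =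
      Complex.exp (2 * π * cmid θ σ * ξ * Complex.I) *
        (Real.sin (blackLength θ k * π * ξ) / (π * ξ) : ℝ) := by
  rw [blackInterval_eq_Ioo, fourierInv_indicator_Ioo (by linarith) hξ]
  push_cast
  ring_nf

theorem fourierInv_blackGeneration {k : ℕ} (hk : 0 ≤ blackLength θ k) {ξ : ℝ} (hξ : ξ ≠ 0) :
    𝓕⁻ (blackGeneration θ k) ξ =
      (Real.sin (blackLength θ k * π * ξ) / (π * ξ) : ℝ) *
        (2 ^ k * ∏ j ∈ Finset.range k, (Real.cos ((1 - θ j) * Theta θ j * π * ξ) : ℂ)) :=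
  calc
    _ = ∑ σ : Fin k → Bool, 𝓕⁻ ((blackInterval θ σ).indicator (1 : ℝ → ℂ)) ξ :=
      fourierInv_finset_sum _ (fun σ _ => integrable_indicator_blackInterval θ σ) ξ
    _ = _ := by
      simp only [fourierInv_indicator_blackInterval hk _ hξ]
      rw [← Finset.sum_mul, sum_exp_cmid, mul_comm]

theorem hasSumUniformly_fourierInv_blackGeneration (hθ : ∀ j, θ j ∈ Set.Icc (0 : ℝ) (1 / 2))
    {c : ℕ → ℂ} {C : ℝ} (hc : ∀ k, ‖c k‖ ≤ C) :
    HasSumUniformly (fun k => c k • 𝓕⁻ (blackGeneration θ k))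
      (𝓕⁻ fun x => ∑' k, c k • blackGeneration θ k x) := by
  have norm_le (k : ℕ) :
      ∫ x, ‖c k • blackGeneration θ k x‖ ≤ C * (2 ^ k * blackLength θ k) := by
    simp only [norm_smul, integral_const_mul]
    exact mul_le_mul (hc k) (integral_norm_blackGeneration_le (blackLength_nonneg hθ k))
      (by positivity) ((norm_nonneg _).trans (hc k))
  simpa only [fourierInv_const_smul, Pi.smul_apply] using hasSumUniformly_fourierInv
    (fun k => (integrable_blackGeneration θ k).smul (c k))
    (.of_nonneg_of_le (fun k => by positivity) norm_le
      ((summable_two_pow_mul_blackLength hθ).mul_left C))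

end Generations

/-- The coefficient of generation `k` in `g^{(1)}`: `(-1) ^ k` if `k ∈ S`, and `0` otherwise. -/
noncomputable def oscCoeff (S : Set ℕ) (k : ℕ) : ℂ := S.indicator (fun k => (-1) ^ k) k

theorem norm_oscCoeff_le_one (S : Set ℕ) (k : ℕ) : ‖oscCoeff S k‖ ≤ 1 :=
  (norm_indicator_le_norm_self _ _).trans (by simp)

theorem oscFunC_eq_tsum (θ : ℕ → ℝ) (S : Set ℕ) :
    oscFunC θ S = fun x => ∑' k, oscCoeff S k • blackGeneration θ k x := by
  funext x
  rw [oscFunC, Complex.ofReal_tsum]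
  refine tsum_congr fun k => ?_
  by_cases hk : k ∈ S
  · have ofReal_indicator (σ : Fin k → Bool) :
        (((blackInterval θ σ).indicator 1 x : ℝ) : ℂ) = (blackInterval θ σ).indicator 1 x := by
      by_cases hx : x ∈ blackInterval θ σ <;> simp [hx]
    simp [oscCoeff, blackGeneration, hk, ofReal_indicator]
  · simp [oscCoeff, hk]

theorem oscFourierTerm_eq {θ : ℕ → ℝ} (S : Set ℕ) {k : ℕ} (hk : 0 ≤ blackLength θ k)
    {ξ : ℝ} (hξ : ξ ≠ 0) :
    oscFourierTerm θ S k ξ = oscCoeff S k • 𝓕⁻ (blackGeneration θ k) ξ := by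
  rw [fourierInv_blackGeneration hk hξ, oscFourierTerm, oscCoeff, blackLength, smul_eq_mul]
  by_cases hkS : k ∈ S
  · simp only [Set.indicator_of_mem hkS]
    push_cast
    ring
  · simp [hkS]

theorem fourierInv_oscFun_eq_general {θ : ℕ → ℝ} (hθ : ∀ j, θ j ∈ Set.Icc (0 : ℝ) (1 / 2))
    (S : Set ℕ) : HasSumUniformlyOn (oscFourierTerm θ S) (𝓕⁻ (oscFunC θ S)) {0}ᶜ := by
  rw [oscFunC_eq_tsum]
  have hsum := hasSumUniformly_fourierInv_blackGeneration hθ (norm_oscCoeff_le_one S)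
  refine hsum.hasSumUniformlyOn.congr (.of_forall fun s ξ hξ => ?_)
  exact Finset.sum_congr rfl fun k _ => (oscFourierTerm_eq S (blackLength_nonneg hθ k) hξ).symm

/-- The inverse Fourier transform of the oscillating function `g^{(1)}` is given, at every
`ξ ≠ 0`, by the series `∑_{k∈S} (−1)^k (sin((1−2θ_k)Θ_k πξ)/(πξ)) 2^k ∏_{j<k} cos((1−θ_j)Θ_j πξ)`,
which moreover converges uniformly on `{|ξ| ≥ δ}` for every `δ > 0`. -/
theorem fourierInv_oscFun_eq (θ : ℕ → ℝ) (hθ : ∀ j, θ j ∈ Set.Ioo (0 : ℝ) (1 / 2))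
    (S : Set ℕ) :
    (∀ ξ : ℝ, ξ ≠ 0 →
      Tendsto (fun n : ℕ => ∑ k ∈ Finset.range n, oscFourierTerm θ S k ξ) atTop
        (nhds (𝓕⁻ (oscFunC θ S) ξ))) ∧
    (∀ δ : ℝ, 0 < δ →
      TendstoUniformlyOn (fun (n : ℕ) (ξ : ℝ) => ∑ k ∈ Finset.range n, oscFourierTerm θ S k ξ)
        (𝓕⁻ (oscFunC θ S)) atTop {ξ : ℝ | δ ≤ |ξ|}) := by
  have h := (fourierInv_oscFun_eq_general (fun j => Set.Ioo_subset_Icc_self (hθ j))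
    S).tendstoUniformlyOn_finsetRange
  exact ⟨fun ξ hξ => h.tendsto_at hξ, fun δ hδ => h.mono fun ξ hξ => abs_pos.1 (hδ.trans_le hξ)⟩
end

section
/- Let n ≥ 1 be an integer, let p_0 ∈ (1,∞) and let ε > 0. There exists δ = δ(n, p_0, ε) > 0, independent of J and p, such that for every J ⊆ {1,2,…,n}, every p ∈ (1, p_0], and every choice of real numbers φ_j ∈ (2^{−j}(1−δ), 2^{−j}(1+δ)) for j ∈ J, one has ∫_0^{2^{n−1}π} ∏_{j∈J} |cos(φ_j ξ)|^p dξ ≤ (1+ε) 2^{n−|J|−1} π C_p^{b(J)}, where C_p = 2 π^p ∑_{s=1}^∞ s^{−p}. -/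
open scoped Real

/-- The constant `C_p = 2 π^p ∑_{s=1}^∞ s^{-p}`. -/
noncomputable def Cp (p : ℝ) : ℝ := 2 * π ^ p * ∑' s : ℕ, (1 : ℝ) / ((s : ℝ) + 1) ^ p

/-- The number of components `b(J) = #{j ∈ J : j - 1 ∉ J}` of a finite set of integers. -/
def numComponents (J : Finset ℕ) : ℕ := (J.filter fun j => j - 1 ∉ J).card

/-!
Write `G_J(ξ) = ∏_{j ∈ J} |cos (2^{-j} ξ)|^p` and let `{a + 1, …, b}` be the last component of `J`.
The telescoping identity
`∏_{a < j ≤ b} cos (2^{-j} ξ) = 2^a sin (2^{-a} ξ) / (2^b sin (2^{-b} ξ))` and Jordan's inequality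
bound the product over this component by `2^a π / (2 ξ)` on `[0, 2^{b-1} π]`, hence its `p`-th power
by `(s + 1)^{-p}` on `[2^a π s, 2^a π (s + 1)]`. The remaining factors, whose indices are below `a`,
are `2^a π`-periodic, so removing the component costs a factor `ζ(p)`; another factor `2` comes from
the symmetry of `G_J` about `2^{b-1} π`. Induction over the components gives the unperturbed bound
with `2 ζ(p) ≤ C_p`, and the Lipschitz dependence of the integrand on the frequencies, uniform for
`p ≤ p₀` on the bounded interval of integration, allows the perturbation.
-/

open Finset MeasureTheory

section Lipschitz

lemma norm_prod_sub_prod_le {ι R : Type*} [NormedCommRing R] [NormOneClass R] {J : Finset ι}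
    {a b : ι → R} (ha : ∀ j ∈ J, ‖a j‖ ≤ 1) (hb : ∀ j ∈ J, ‖b j‖ ≤ 1) :
    ‖∏ j ∈ J, a j - ∏ j ∈ J, b j‖ ≤ ∑ j ∈ J, ‖a j - b j‖ := by
  induction J using Finset.cons_induction with
  | empty => simp
  | cons i J hi ih =>
    simp only [mem_cons, forall_eq_or_imp] at ha hb
    have hprod : ‖∏ j ∈ J, a j‖ ≤ 1 :=
      (Finset.norm_prod_le J a).trans (prod_le_one (fun _ _ ↦ norm_nonneg _) ha.2)
    rw [prod_cons, prod_cons, sum_cons]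
    calc ‖a i * ∏ j ∈ J, a j - b i * ∏ j ∈ J, b j‖
        = ‖(a i - b i) * ∏ j ∈ J, a j + b i * (∏ j ∈ J, a j - ∏ j ∈ J, b j)‖ := by ring_nf
      _ ≤ ‖a i - b i‖ * ‖∏ j ∈ J, a j‖ + ‖b i‖ * ‖∏ j ∈ J, a j - ∏ j ∈ J, b j‖ :=
        (norm_add_le _ _).trans (add_le_add (norm_mul_le _ _) (norm_mul_le _ _))
      _ ≤ ‖a i - b i‖ * 1 + 1 * ∑ j ∈ J, ‖a j - b j‖ := by
        gcongr
        exacts [hb.1, ih ha.2 hb.2]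
      _ = ‖a i - b i‖ + ∑ j ∈ J, ‖a j - b j‖ := by ring

lemma abs_rpow_sub_rpow_le_mul_abs_sub {x y p : ℝ} (hx : x ∈ Set.Icc 0 1) (hy : y ∈ Set.Icc 0 1)
    (hp : 1 ≤ p) : |x ^ p - y ^ p| ≤ p * |x - y| := by
  refine Convex.norm_image_sub_le_of_norm_hasDerivWithin_le (s := Set.Icc (0 : ℝ) 1)
    (f := fun t ↦ t ^ p) (f' := fun t ↦ p * t ^ (p - 1))
    (fun t _ ↦ (Real.hasDerivAt_rpow_const (Or.inr hp)).hasDerivWithinAt)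
    (fun t ht ↦ ?_) (convex_Icc 0 1) hy hx
  have hle : t ^ (p - 1) ≤ 1 := Real.rpow_le_one ht.1 ht.2 (by linarith)
  rw [Real.norm_of_nonneg (mul_nonneg (by linarith) (Real.rpow_nonneg ht.1 _))]
  exact mul_le_of_le_one_right (by linarith) hle

end Lipschitz

section Integral

variable {T : ℝ}

lemma integral_two_mul_period_of_even {E : Type*} [NormedAddCommGroup E] [NormedSpace ℝ E]
    {f : ℝ → E} (hf : Function.Periodic f (2 * T)) (heven : Function.Even f)
    (hint : ∀ a b, IntervalIntegrable f volume a b) :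
    ∫ ξ in 0..2 * T, f ξ = 2 • ∫ ξ in 0..T, f ξ := by
  have hshift : ∫ ξ in 0..2 * T, f ξ = ∫ ξ in -T..T, f ξ := by
    have := hf.intervalIntegral_add_eq 0 (-T)
    rwa [zero_add, show -T + 2 * T = T by ring] at this
  have hreflect : ∫ ξ in -T..0, f ξ = ∫ ξ in 0..T, f ξ := by
    have := intervalIntegral.integral_comp_neg (a := 0) (b := T) f
    rw [neg_zero] at this
    rw [← this]
    exact intervalIntegral.integral_congr fun ξ _ ↦ heven ξ
  rw [hshift, ← intervalIntegral.integral_add_adjacent_intervals (hint (-T) 0) (hint 0 T),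
    hreflect, two_nsmul]

lemma integral_mul_le_sum_mul_integral_of_periodic {f g : ℝ → ℝ} {c : ℕ → ℝ} {N : ℕ}
    (hT : 0 ≤ T) (hper : Function.Periodic f T) (hf0 : ∀ ξ, 0 ≤ f ξ)
    (hf : ∀ a b, IntervalIntegrable f volume a b)
    (hgf : ∀ a b, IntervalIntegrable (fun ξ ↦ g ξ * f ξ) volume a b)
    (hg : ∀ s < N, ∀ ξ ∈ Set.Icc (s * T) ((s + 1) * T), g ξ ≤ c s) :
    ∫ ξ in 0..N * T, g ξ * f ξ ≤ (∑ s ∈ range N, c s) * ∫ ξ in 0..T, f ξ := by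
  have hsplit := intervalIntegral.sum_integral_adjacent_intervals (μ := volume)
    (f := fun ξ ↦ g ξ * f ξ) (a := fun s : ℕ ↦ s * T) (n := N) fun _ _ ↦ hgf _ _
  simp only [Nat.cast_zero, zero_mul, Nat.cast_add, Nat.cast_one] at hsplit
  rw [← hsplit, sum_mul]
  refine sum_le_sum fun s hs ↦ ?_
  have hperiod : ∫ ξ in 0..T, f ξ = ∫ ξ in (s * T)..((s + 1) * T), f ξ := by
    have := hper.intervalIntegral_add_eq 0 (s * T)
    rwa [zero_add, ← add_one_mul] at this
  rw [hperiod, ← intervalIntegral.integral_const_mul]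
  refine intervalIntegral.integral_mono_on (by linarith) (hgf _ _) ((hf _ _).const_mul _)
    fun ξ hξ ↦ ?_
  exact mul_le_mul_of_nonneg_right (hg s (mem_range.1 hs) ξ hξ) (hf0 ξ)

end Integral

section CosProd

variable {ι : Type*} {φ : ι → ℝ} {I J : Finset ι} {p : ℝ}

/-- The integrand `∏_{j ∈ J} |cos (φ_j ξ)|^p` with frequencies `φ_j`. -/
noncomputable def cosProd (φ : ι → ℝ) (J : Finset ι) (p ξ : ℝ) : ℝ :=
  ∏ j ∈ J, |Real.cos (φ j * ξ)| ^ p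

lemma cosProd_nonneg (φ : ι → ℝ) (J : Finset ι) (p ξ : ℝ) : 0 ≤ cosProd φ J p ξ :=
  prod_nonneg fun _ _ ↦ by positivity

lemma cosProd_eq_abs_prod_rpow (φ : ι → ℝ) (J : Finset ι) (p ξ : ℝ) :
    cosProd φ J p ξ = |∏ j ∈ J, Real.cos (φ j * ξ)| ^ p := by
  rw [cosProd, Real.finsetProd_rpow _ _ fun _ _ ↦ abs_nonneg _, abs_prod]

lemma cosProd_union [DecidableEq ι] (h : Disjoint I J) (φ : ι → ℝ) (p ξ : ℝ) :
    cosProd φ (I ∪ J) p ξ = cosProd φ I p ξ * cosProd φ J p ξ :=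
  prod_union h

lemma continuous_cosProd (φ : ι → ℝ) (J : Finset ι) (hp : 0 ≤ p) : Continuous (cosProd φ J p) :=
  continuous_finsetProd _ fun _ _ ↦ Continuous.rpow_const (by fun_prop) fun _ ↦ Or.inr hp

lemma intervalIntegrable_cosProd (φ : ι → ℝ) (J : Finset ι) (hp : 0 ≤ p) (a b : ℝ) :
    IntervalIntegrable (cosProd φ J p) volume a b :=
  (continuous_cosProd φ J hp).intervalIntegrable a b

lemma even_cosProd (φ : ι → ℝ) (J : Finset ι) (p : ℝ) : Function.Even (cosProd φ J p) := fun ξ ↦ by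
  simp [cosProd]

lemma periodic_cosProd {T : ℝ} (hT : ∀ j ∈ J, ∃ k : ℤ, φ j * T = k * π) (p : ℝ) :
    Function.Periodic (cosProd φ J p) T := by
  intro ξ
  refine prod_congr rfl fun j hj ↦ ?_
  obtain ⟨k, hk⟩ := hT j hj
  rw [mul_add, hk, Real.cos_add_int_mul_pi, abs_mul, abs_zpow, abs_neg, abs_one, one_zpow, one_mul]

lemma abs_cosProd_sub_cosProd_le (φ ψ : ι → ℝ) (J : Finset ι) (hp : 1 ≤ p) (ξ : ℝ) :
    |cosProd φ J p ξ - cosProd ψ J p ξ| ≤ p * (∑ j ∈ J, |φ j - ψ j|) * |ξ| := by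
  have hmem (x : ℝ) : |Real.cos x| ∈ Set.Icc (0 : ℝ) 1 := ⟨abs_nonneg _, Real.abs_cos_le_one _⟩
  have hnorm (x : ℝ) : ‖|Real.cos x| ^ p‖ ≤ 1 := by
    rw [Real.norm_of_nonneg (by positivity)]
    exact Real.rpow_le_one (hmem x).1 (hmem x).2 (by linarith)
  rw [mul_assoc, sum_mul, mul_sum]
  refine (norm_prod_sub_prod_le (fun _ _ ↦ hnorm _) fun _ _ ↦ hnorm _).trans
    (sum_le_sum fun j _ ↦ ?_)
  calc |(|Real.cos (φ j * ξ)| ^ p - |Real.cos (ψ j * ξ)| ^ p)|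
      ≤ p * |(|Real.cos (φ j * ξ)| - |Real.cos (ψ j * ξ)|)| :=
        abs_rpow_sub_rpow_le_mul_abs_sub (hmem _) (hmem _) hp
    _ ≤ p * |φ j * ξ - ψ j * ξ| := by
        refine mul_le_mul_of_nonneg_left ?_ (by linarith)
        exact (abs_abs_sub_abs_le_abs_sub _ _).trans (Real.abs_cos_sub_cos_le _ _)
    _ = p * (|φ j - ψ j| * |ξ|) := by rw [← sub_mul, abs_mul]

lemma integral_cosProd_le_integral_cosProd_add (φ ψ : ι → ℝ) (J : Finset ι) (hp : 1 ≤ p) {L : ℝ}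
    (hL : 0 ≤ L) :
    ∫ ξ in 0..L, cosProd φ J p ξ ≤
      (∫ ξ in 0..L, cosProd ψ J p ξ) + p * (∑ j ∈ J, |φ j - ψ j|) * L ^ 2 := by
  have hp0 : 0 ≤ p := by linarith
  have hψ := intervalIntegrable_cosProd ψ J hp0 0 L
  calc ∫ ξ in 0..L, cosProd φ J p ξ
      ≤ ∫ ξ in 0..L, (cosProd ψ J p ξ + p * (∑ j ∈ J, |φ j - ψ j|) * L) := by
        refine intervalIntegral.integral_mono_on hL (intervalIntegrable_cosProd φ J hp0 0 L)
          (hψ.add intervalIntegrable_const) fun ξ hξ ↦ ?_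
        rw [← sub_le_iff_le_add']
        refine (le_abs_self _).trans ((abs_cosProd_sub_cosProd_le φ ψ J hp ξ).trans ?_)
        gcongr
        rw [abs_of_nonneg hξ.1]
        exact hξ.2
    _ = (∫ ξ in 0..L, cosProd ψ J p ξ) + p * (∑ j ∈ J, |φ j - ψ j|) * L ^ 2 := by
        rw [intervalIntegral.integral_add hψ intervalIntegrable_const,
          intervalIntegral.integral_const, smul_eq_mul]
        ring

end CosProd

section Zeta

variable {p : ℝ}

/-- The value `ζ(p) = ∑_{s ≥ 1} s^{-p}` for real `p > 1`, indexed as in `Cp`; the series does not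
converge for `p ≤ 1`, where the value is `0`. -/
noncomputable def zetaSeries (p : ℝ) : ℝ := ∑' s : ℕ, (1 : ℝ) / ((s : ℝ) + 1) ^ p

lemma sum_le_zetaSeries (hp : 1 < p) (N : ℕ) :
    ∑ s ∈ range N, (1 : ℝ) / ((s : ℝ) + 1) ^ p ≤ zetaSeries p := by
  have hsum : Summable fun s : ℕ ↦ (1 : ℝ) / ((s : ℝ) + 1) ^ p := by
    simpa using (summable_nat_add_iff 1).2 (Real.summable_one_div_nat_rpow.2 hp)
  exact hsum.sum_le_tsum _ fun _ _ ↦ by positivity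

lemma one_le_zetaSeries (hp : 1 < p) : 1 ≤ zetaSeries p := by
  simpa using sum_le_zetaSeries hp 1

lemma one_le_two_zpow_mul_pi_mul_pow (hp : 1 < p) {m n : ℕ} (hmn : m ≤ n) (k : ℕ) :
    1 ≤ (2 : ℝ) ^ ((n : ℤ) - (m : ℤ) - 1) * π * (2 * zetaSeries p) ^ k := by
  have hhalf : (2 : ℝ) ^ (-1 : ℤ) ≤ 2 ^ ((n : ℤ) - (m : ℤ) - 1) :=
    zpow_le_zpow_right₀ one_le_two (by omega)
  have hpi : 1 ≤ (2 : ℝ) ^ ((n : ℤ) - (m : ℤ) - 1) * π := calc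
    (1 : ℝ) ≤ 2 ^ (-1 : ℤ) * π := by
      rw [zpow_neg_one]
      linarith [Real.two_le_pi]
    _ ≤ _ := by gcongr
  exact one_le_mul_of_one_le_of_one_le hpi (one_le_pow₀ (by linarith [one_le_zetaSeries hp]))

lemma two_mul_zetaSeries_le_Cp (hp : 0 ≤ p) : 2 * zetaSeries p ≤ Cp p := by
  have hpi : 1 ≤ π ^ p := Real.one_le_rpow (by linarith [Real.pi_gt_three]) hp
  have hzeta : 0 ≤ zetaSeries p := tsum_nonneg fun _ ↦ by positivity
  rw [show Cp p = 2 * π ^ p * zetaSeries p from rfl]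
  gcongr
  linarith

end Zeta

section Components

variable {I J : Finset ℕ} {a b n : ℕ}

lemma disjoint_Ioc_of_forall_le (hI : ∀ j ∈ I, j ≤ a) (b : ℕ) : Disjoint I (Ioc a b) :=
  disjoint_left.2 fun j hj hj' ↦ (hI j hj).not_gt (mem_Ioc.1 hj').1

lemma numComponents_union_Ioc (hI : ∀ j ∈ I, j < a) (hab : a < b) :
    numComponents (I ∪ Ioc a b) = numComponents I + 1 := by
  have hstarts : ((I ∪ Ioc a b).filter fun j ↦ j - 1 ∉ I ∪ Ioc a b) =
      insert (a + 1) (I.filter fun j ↦ j - 1 ∉ I) := by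
    ext j
    simp only [mem_filter, mem_union, mem_Ioc, mem_insert]
    grind
  have hnew : a + 1 ∉ I.filter fun j ↦ j - 1 ∉ I := fun h ↦ by
    have := hI _ (mem_filter.1 h).1
    omega
  rw [numComponents, hstarts, card_insert_of_notMem hnew, numComponents]

lemma exists_eq_union_Ioc_of_mem (hJ : J ⊆ Icc 1 n) (hn : n ∈ J) :
    ∃ a < n, ∃ I ⊆ Ico 1 a, J = I ∪ Ioc a n := by
  have hJ' (j : ℕ) (hj : j ∈ J) : 1 ≤ j ∧ j ≤ n := mem_Icc.1 (hJ hj)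
  let a := Nat.findGreatest (· ∉ J) n
  have haJ : a ∉ J :=
    Nat.findGreatest_spec (P := (· ∉ J)) n.zero_le fun h ↦ absurd (hJ' 0 h).1 (by omega)
  have hblock (j : ℕ) (haj : a < j) (hjn : j ≤ n) : j ∈ J :=
    not_not.1 (Nat.findGreatest_is_greatest haj hjn)
  have han : a ≤ n := Nat.findGreatest_le n
  refine ⟨a, by grind, J.filter (· < a), ?_, ?_⟩
  · intro j hj
    grind
  · ext j
    simp only [mem_union, mem_filter, mem_Ioc]
    grind

end Components

section Dyadic

variable {J : Finset ℕ} {p ξ : ℝ} {a b c n : ℕ}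

/-- The unperturbed frequencies `2^{-j}`. -/
noncomputable def dyadicFreq (j : ℕ) : ℝ := 2 ^ (-(j : ℤ))

lemma dyadicFreq_mul (j : ℕ) (ξ : ℝ) : dyadicFreq j * ξ = ξ / 2 ^ j := by
  rw [dyadicFreq, zpow_neg, zpow_natCast, inv_mul_eq_div]

lemma dyadicFreq_le_one (j : ℕ) : dyadicFreq j ≤ 1 :=
  zpow_le_one_of_nonpos₀ one_le_two (by simp)

lemma abs_sub_dyadicFreq_le {x δ : ℝ} {j : ℕ} (hδ : 0 ≤ δ)
    (hx : x ∈ Set.Ioo (dyadicFreq j * (1 - δ)) (dyadicFreq j * (1 + δ))) :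
    |x - dyadicFreq j| ≤ δ := by
  have hle : dyadicFreq j * δ ≤ δ := mul_le_of_le_one_left hδ (dyadicFreq_le_one j)
  rw [abs_le]
  constructor <;> linarith [hx.1, hx.2]

lemma periodic_cosProd_dyadicFreq (hJ : ∀ j ∈ J, j ≤ n) (p : ℝ) :
    Function.Periodic (cosProd dyadicFreq J p) (2 ^ n * π) := by
  refine periodic_cosProd (fun j hj ↦ ⟨2 ^ (n - j), ?_⟩) p
  obtain ⟨k, rfl⟩ := Nat.exists_eq_add_of_le (hJ j hj)
  rw [dyadicFreq_mul, Nat.add_sub_cancel_left, pow_add]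
  push_cast
  field_simp

lemma integral_cosProd_dyadicFreq_succ (hp : 0 ≤ p) (hJ : ∀ j ∈ J, j ≤ n + 1) :
    ∫ ξ in 0..2 ^ (n + 1) * π, cosProd dyadicFreq J p ξ =
      2 * ∫ ξ in 0..2 ^ n * π, cosProd dyadicFreq J p ξ := by
  have hperiod : (2 : ℝ) ^ (n + 1) * π = 2 * (2 ^ n * π) := by ring
  rw [hperiod, integral_two_mul_period_of_even (hperiod ▸ periodic_cosProd_dyadicFreq hJ p)
    (even_cosProd _ _ _) (intervalIntegrable_cosProd _ _ hp), nsmul_eq_mul, Nat.cast_two]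

lemma prod_Ioc_cos_mul_sin (hab : a ≤ b) (ξ : ℝ) :
    (∏ j ∈ Ioc a b, Real.cos (dyadicFreq j * ξ)) * (2 ^ b * Real.sin (dyadicFreq b * ξ)) =
      2 ^ a * Real.sin (dyadicFreq a * ξ) := by
  induction b, hab using Nat.le_induction with
  | base => simp
  | succ b hab ih =>
    have hdouble : dyadicFreq b * ξ = 2 * (dyadicFreq (b + 1) * ξ) := by
      rw [dyadicFreq_mul, dyadicFreq_mul, pow_succ]
      field_simp
    rw [prod_Ioc_succ_top (by omega), ← ih, hdouble, Real.sin_two_mul]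
    ring

lemma abs_prod_Ioc_cos_mul_le (hac : a ≤ c) (h0 : 0 ≤ ξ) (hξ : ξ ≤ 2 ^ c * π) :
    |∏ j ∈ Ioc a (c + 1), Real.cos (dyadicFreq j * ξ)| * (2 * ξ) ≤ 2 ^ a * π := by
  set P := ∏ j ∈ Ioc a (c + 1), Real.cos (dyadicFreq j * ξ)
  set S := Real.sin (dyadicFreq (c + 1) * ξ) with hS
  have hjordan : 2 * ξ ≤ π * (2 ^ (c + 1) * |S|) := by
    have hle : dyadicFreq (c + 1) * ξ ≤ π / 2 := by
      rw [dyadicFreq_mul, div_le_div_iff₀ (by positivity) two_pos, pow_succ]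
      linarith
    have hsin := (Real.mul_le_sin (by rw [dyadicFreq_mul]; positivity) hle).trans (le_abs_self _)
    rw [← hS, dyadicFreq_mul, div_mul_div_comm, div_le_iff₀ (by positivity)] at hsin
    linarith
  calc |P| * (2 * ξ) ≤ |P| * (π * (2 ^ (c + 1) * |S|)) := by gcongr
    _ = π * |P * (2 ^ (c + 1) * S)| := by
      rw [abs_mul, abs_mul, abs_of_pos (by positivity : (0 : ℝ) < 2 ^ (c + 1))]
      ring
    _ = π * (2 ^ a * |Real.sin (dyadicFreq a * ξ)|) := by
      rw [prod_Ioc_cos_mul_sin (by omega), abs_mul, abs_of_pos (by positivity : (0 : ℝ) < 2 ^ a)]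
    _ ≤ π * (2 ^ a * 1) := by
      gcongr
      exact Real.abs_sin_le_one _
    _ = 2 ^ a * π := by ring

lemma cosProd_Ioc_le (hac : a ≤ c) (hp : 0 ≤ p) {s : ℕ} (hs : s * (2 ^ a * π) ≤ ξ)
    (hξ : ξ ≤ 2 ^ c * π) :
    cosProd dyadicFreq (Ioc a (c + 1)) p ξ ≤ 1 / ((s : ℝ) + 1) ^ p := by
  have hdecay := abs_prod_Ioc_cos_mul_le hac (le_trans (by positivity) hs) hξ
  rw [cosProd_eq_abs_prod_rpow]
  set P := ∏ j ∈ Ioc a (c + 1), Real.cos (dyadicFreq j * ξ) with hP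
  have hP1 : |P| ≤ 1 := by
    rw [hP, abs_prod]
    exact prod_le_one (fun _ _ ↦ abs_nonneg _) fun _ _ ↦ Real.abs_cos_le_one _
  have hPs : |P| * (2 * s) ≤ 1 := by
    refine le_of_mul_le_mul_right ?_ (by positivity : 0 < 2 ^ a * π)
    calc |P| * (2 * s) * (2 ^ a * π) = |P| * (2 * (s * (2 ^ a * π))) := by ring
      _ ≤ |P| * (2 * ξ) := by gcongr
      _ ≤ 1 * (2 ^ a * π) := by rwa [one_mul]
  have hle : |P| ≤ 1 / ((s : ℝ) + 1) := by
    rw [le_div_iff₀ (by positivity)]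
    rcases s.eq_zero_or_pos with rfl | hpos
    · simpa using hP1
    · have : (1 : ℝ) ≤ s := by exact_mod_cast hpos
      exact (mul_le_mul_of_nonneg_left (by linarith) (abs_nonneg P)).trans hPs
  calc |P| ^ p ≤ (1 / ((s : ℝ) + 1)) ^ p := by gcongr
    _ = 1 / ((s : ℝ) + 1) ^ p := by rw [Real.div_rpow zero_le_one (by positivity), Real.one_rpow]

lemma integral_cosProd_union_Ioc_le (hp : 1 < p) (hJ : ∀ j ∈ J, j ≤ a) (hac : a ≤ c) :
    ∫ ξ in 0..2 ^ (c + 1) * π, cosProd dyadicFreq (J ∪ Ioc a (c + 1)) p ξ ≤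
      2 * zetaSeries p * ∫ ξ in 0..2 ^ a * π, cosProd dyadicFreq J p ξ := by
  have hp0 : 0 ≤ p := by linarith
  have hlen : ((2 ^ (c - a) : ℕ) : ℝ) * (2 ^ a * π) = 2 ^ c * π := by
    rw [Nat.cast_pow, Nat.cast_two, ← mul_assoc, ← pow_add, Nat.sub_add_cancel hac]
  have hfactor (ξ : ℝ) : cosProd dyadicFreq (J ∪ Ioc a (c + 1)) p ξ =
      cosProd dyadicFreq (Ioc a (c + 1)) p ξ * cosProd dyadicFreq J p ξ := by
    rw [cosProd_union (disjoint_Ioc_of_forall_le hJ _), mul_comm]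
  rw [integral_cosProd_dyadicFreq_succ hp0 (by grind), mul_assoc]
  refine mul_le_mul_of_nonneg_left ?_ zero_le_two
  simp only [hfactor]
  rw [← hlen]
  refine (integral_mul_le_sum_mul_integral_of_periodic (c := fun s ↦ 1 / ((s : ℝ) + 1) ^ p)
    (by positivity) (periodic_cosProd_dyadicFreq hJ p) (cosProd_nonneg _ _ _)
    (intervalIntegrable_cosProd _ _ hp0) (fun _ _ ↦ Continuous.intervalIntegrable
      ((continuous_cosProd _ _ hp0).mul (continuous_cosProd _ _ hp0)) _ _)
    fun s hs ξ hξ ↦ cosProd_Ioc_le hac hp0 hξ.1 (hξ.2.trans ?_)).trans ?_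
  · rw [← hlen]
    gcongr
    exact_mod_cast hs
  · exact mul_le_mul_of_nonneg_right (sum_le_zetaSeries hp _)
      (intervalIntegral.integral_nonneg (by positivity) fun _ _ ↦ cosProd_nonneg _ _ _ _)

lemma integral_cosProd_dyadicFreq_period_le (hp : 1 < p) (hJ : J ⊆ Icc 1 n) :
    ∫ ξ in 0..2 ^ n * π, cosProd dyadicFreq J p ξ ≤
      (2 : ℝ) ^ ((n : ℤ) - (#J : ℤ)) * π * (2 * zetaSeries p) ^ numComponents J := by
  induction n using Nat.strong_induction_on generalizing J with
  | _ n ih =>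
    rcases n with _ | c
    · obtain rfl : J = ∅ := by simpa using hJ
      simp [cosProd, numComponents]
    by_cases hc : c + 1 ∈ J
    · obtain ⟨a, hac, I, hI, rfl⟩ := exists_eq_union_Ioc_of_mem hJ hc
      have hlt (j : ℕ) (hj : j ∈ I) : j < a := (mem_Ico.1 (hI hj)).2
      have hle (j : ℕ) (hj : j ∈ I) : j ≤ a := (hlt j hj).le
      have hzeta := one_le_zetaSeries hp
      have hexp : ((c + 1 : ℕ) : ℤ) - (#(I ∪ Ioc a (c + 1)) : ℤ) = a - #I := by
        rw [card_union_of_disjoint (disjoint_Ioc_of_forall_le hle _), Nat.card_Ioc]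
        omega
      rw [hexp, numComponents_union_Ioc hlt hac]
      calc ∫ ξ in 0..2 ^ (c + 1) * π, cosProd dyadicFreq (I ∪ Ioc a (c + 1)) p ξ
          ≤ 2 * zetaSeries p * ∫ ξ in 0..2 ^ a * π, cosProd dyadicFreq I p ξ :=
            integral_cosProd_union_Ioc_le hp hle (by omega)
        _ ≤ 2 * zetaSeries p *
            ((2 : ℝ) ^ ((a : ℤ) - (#I : ℤ)) * π * (2 * zetaSeries p) ^ numComponents I) := by
          gcongr
          exact ih a hac (hI.trans Ico_subset_Icc_self)
        _ = _ := by ring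
    · have hJc : J ⊆ Icc 1 c := fun j hj ↦ by grind
      have hexp : ((c + 1 : ℕ) : ℤ) - (#J : ℤ) = c - #J + 1 := by push_cast; ring
      rw [integral_cosProd_dyadicFreq_succ (by linarith) (by grind), hexp,
        zpow_add_one₀ two_ne_zero]
      linarith [ih c (by omega) hJc]

lemma integral_cosProd_dyadicFreq_half_period_le (hn : 1 ≤ n) (hp : 1 < p) (hJ : J ⊆ Icc 1 n) :
    ∫ ξ in 0..2 ^ (n - 1) * π, cosProd dyadicFreq J p ξ ≤
      (2 : ℝ) ^ ((n : ℤ) - (#J : ℤ) - 1) * π * (2 * zetaSeries p) ^ numComponents J := by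
  obtain ⟨m, rfl⟩ := Nat.exists_eq_add_of_le' hn
  have hfull := integral_cosProd_dyadicFreq_period_le hp hJ
  rw [integral_cosProd_dyadicFreq_succ (by linarith) (by grind)] at hfull
  rw [Nat.add_sub_cancel, zpow_sub_one₀ two_ne_zero]
  linarith

end Dyadic

theorem integral_prod_cos_perturbed_le_general (n : ℕ) (hn : 1 ≤ n) (p₀ : ℝ) (hp₀ : 1 < p₀)
    (ε : ℝ) (hε : 0 < ε) :
    ∃ δ : ℝ, 0 < δ ∧
      ∀ J : Finset ℕ, J ⊆ Finset.Icc 1 n → ∀ p : ℝ, 1 < p → p ≤ p₀ → ∀ φ : ℕ → ℝ,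
        (∀ j ∈ J, φ j ∈
          Set.Ioo ((2 : ℝ) ^ (-(j : ℤ)) * (1 - δ)) ((2 : ℝ) ^ (-(j : ℤ)) * (1 + δ))) →
        ∫ ξ in Set.Ioc (0 : ℝ) (2 ^ (n - 1) * π), ∏ j ∈ J, |Real.cos (φ j * ξ)| ^ p ≤
          (1 + ε) * ((2 : ℝ) ^ ((n : ℤ) - (J.card : ℤ) - 1) * π *
            (2 * zetaSeries p) ^ numComponents J) := by
  set L : ℝ := 2 ^ (n - 1) * π
  have hL : 0 < L := by positivity
  set δ : ℝ := ε / (p₀ * n * L ^ 2) with hδ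
  have hδ0 : 0 < δ := by positivity
  refine ⟨δ, hδ0, fun J hJ p hp hpp₀ φ hφ ↦ ?_⟩
  have hcard : #J ≤ n := by simpa using card_le_card hJ
  have hfreq : ∑ j ∈ J, |φ j - dyadicFreq j| ≤ n * δ := calc
    _ ≤ #J • δ := sum_le_card_nsmul _ _ _ fun j hj ↦ abs_sub_dyadicFreq_le hδ0.le (hφ j hj)
    _ ≤ n * δ := by rw [nsmul_eq_mul]; gcongr
  have hperturb : p * (∑ j ∈ J, |φ j - dyadicFreq j|) * L ^ 2 ≤ ε := calc
    _ ≤ p₀ * (n * δ) * L ^ 2 := by gcongr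
    _ = ε := by rw [hδ]; field_simp
  rw [← intervalIntegral.integral_of_le hL.le]
  calc ∫ ξ in 0..L, cosProd φ J p ξ
      ≤ (∫ ξ in 0..L, cosProd dyadicFreq J p ξ) + p * (∑ j ∈ J, |φ j - dyadicFreq j|) * L ^ 2 :=
        integral_cosProd_le_integral_cosProd_add φ dyadicFreq J hp.le hL.le
    _ ≤ _ := by
      linarith [integral_cosProd_dyadicFreq_half_period_le hn hp hJ,
        le_mul_of_one_le_right hε.le (one_le_two_zpow_mul_pi_mul_pow hp hcard (numComponents J))]

/-- Perturbed incomplete cosine expansions of `sin(x)/x`: for every `n ≥ 1`, `p₀ ∈ (1,∞)`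
and `ε > 0` there is a `δ = δ(n,p₀,ε) > 0`, independent of `J` and `p`, such that for every
`J ⊆ {1,…,n}`, every `p ∈ (1,p₀]` and all `φ_j ∈ (2^{-j}(1-δ), 2^{-j}(1+δ))` (`j ∈ J`),
`∫_0^{2^{n-1}π} ∏_{j∈J} |cos(φ_j ξ)|^p dξ ≤ (1+ε) 2^{n-|J|-1} π C_p^{b(J)}`. -/
theorem integral_prod_cos_perturbed_le (n : ℕ) (hn : 1 ≤ n) (p₀ : ℝ) (hp₀ : 1 < p₀)
    (ε : ℝ) (hε : 0 < ε) :
    ∃ δ : ℝ, 0 < δ ∧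
      ∀ J : Finset ℕ, J ⊆ Finset.Icc 1 n → ∀ p : ℝ, 1 < p → p ≤ p₀ → ∀ φ : ℕ → ℝ,
        (∀ j ∈ J, φ j ∈
          Set.Ioo ((2 : ℝ) ^ (-(j : ℤ)) * (1 - δ)) ((2 : ℝ) ^ (-(j : ℤ)) * (1 + δ))) →
        ∫ ξ in Set.Ioc (0 : ℝ) (2 ^ (n - 1) * π), ∏ j ∈ J, |Real.cos (φ j * ξ)| ^ p ≤
          (1 + ε) * ((2 : ℝ) ^ ((n : ℤ) - (J.card : ℤ) - 1) * π * Cp p ^ numComponents J) := by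
  obtain ⟨δ, hδ, h⟩ := integral_prod_cos_perturbed_le_general n hn p₀ hp₀ ε hε
  refine ⟨δ, hδ, fun J hJ p hp hpp₀ φ hφ ↦ (h J hJ p hp hpp₀ φ hφ).trans ?_⟩
  have hzeta := one_le_zetaSeries hp
  gcongr
  exact two_mul_zetaSeries_le_Cp (by linarith)
end
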